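/- Let T be a tree. Then every maximum dissociation set of T contains exactly two vertices of each critical 3-path of T (a 3-path both of whose edges are α₃-critical in T). -/

import Mathlib

open SimpleGraph

/-- `l` is a (not necessarily induced) `k`-path in `G`: a list of `k` pairwise distinct
vertices in which consecutive vertices are adjacent. -/
def IsKPath {V : Type*} (G : SimpleGraph V) (k : ℕ) (l : List V) : Prop :=
  l.length = k ∧ l.Nodup ∧ l.Chain' G.Adj

/-- A `k`-matching in `G`: a finite set of pairwise vertex-disjoint `k`-paths. -/
def IsKMatching {V : Type*} (G : SimpleGraph V) (k : ℕ) (M : Finset (List V)) : Prop :=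
  (∀ l ∈ M, IsKPath G k l) ∧
    (M : Set (List V)).Pairwise fun l₁ l₂ => ∀ v ∈ l₁, v ∉ l₂

/-- The `k`-matching number `μ_k(G)`: the maximum cardinality of a `k`-matching. -/
noncomputable def kMatchNum {V : Type*} (G : SimpleGraph V) (k : ℕ) : ℕ :=
  sSup {n | ∃ M : Finset (List V), IsKMatching G k M ∧ M.card = n}

/-- A maximum `k`-matching: a `k`-matching of cardinality `μ_k(G)`. -/
def IsMaxKMatching {V : Type*} (G : SimpleGraph V) (k : ℕ) (M : Finset (List V)) : Prop :=
  IsKMatching G k M ∧ M.card = kMatchNum G k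

/-- A `k`-independent set: a set of vertices whose induced subgraph contains no `k`-path. -/
def IsKIndepSet {V : Type*} (G : SimpleGraph V) (k : ℕ) (S : Finset V) : Prop :=
  ∀ l : List V, IsKPath G k l → ¬ (∀ v ∈ l, v ∈ S)

/-- The `k`-independence number `α_k(G)`. -/
noncomputable def kIndepNum {V : Type*} (G : SimpleGraph V) (k : ℕ) : ℕ :=
  sSup {n | ∃ S : Finset V, IsKIndepSet G k S ∧ S.card = n}

/-- A `k`-vertex cover: a set of vertices meeting every `k`-path of `G`. -/
def IsKCover {V : Type*} (G : SimpleGraph V) (k : ℕ) (C : Finset V) : Prop :=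
  ∀ l : List V, IsKPath G k l → ∃ v ∈ l, v ∈ C

/-- The `k`-vertex cover number `τ_k(G)`. -/
noncomputable def kCoverNum {V : Type*} (G : SimpleGraph V) (k : ℕ) : ℕ :=
  sInf {n | ∃ C : Finset V, IsKCover G k C ∧ C.card = n}

/-- A dissociation set: a set of vertices inducing a subgraph of maximum degree at most 1,
i.e. every vertex of `S` has at most one neighbour inside `S`. -/
def IsDissocSet {V : Type*} (G : SimpleGraph V) (S : Finset V) : Prop :=
  ∀ v ∈ S, ∀ u ∈ S, ∀ w ∈ S, G.Adj v u → G.Adj v w → u = w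

/-- The dissociation number `α₃(G)`. -/
noncomputable def dissNum {V : Type*} (G : SimpleGraph V) : ℕ :=
  sSup {n | ∃ S : Finset V, IsDissocSet G S ∧ S.card = n}

/-- A maximum dissociation set: a dissociation set of cardinality `α₃(G)`. -/
def IsMaxDissocSet {V : Type*} (G : SimpleGraph V) (S : Finset V) : Prop :=
  IsDissocSet G S ∧ S.card = dissNum G

/-- `uv` is an `α₃`-critical edge of `G`: deleting it increases the dissociation number. -/
def IsAlpha3Critical {V : Type*} (G : SimpleGraph V) (u v : V) : Prop :=
  G.Adj u v ∧ dissNum G < dissNum (G.deleteEdges {s(u, v)})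

/-- `uv` is a `μ₃`-critical edge of `G`: deleting it decreases the `3`-matching number. -/
def IsMu3Critical {V : Type*} (G : SimpleGraph V) (u v : V) : Prop :=
  G.Adj u v ∧ kMatchNum (G.deleteEdges {s(u, v)}) 3 < kMatchNum G 3

/-- An insulated `α₃`-critical edge: an `α₃`-critical edge sharing no end-vertex with any
other `α₃`-critical edge. -/
def IsInsulated {V : Type*} (G : SimpleGraph V) (u v : V) : Prop :=
  IsAlpha3Critical G u v ∧
    ∀ x y : V, IsAlpha3Critical G x y → s(x, y) ≠ s(u, v) →
      x ≠ u ∧ x ≠ v ∧ y ≠ u ∧ y ≠ v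

/-- A flexible vertex: one lying in some but not all maximum dissociation sets. -/
def IsFlexible {V : Type*} (G : SimpleGraph V) (v : V) : Prop :=
  (∃ S : Finset V, IsMaxDissocSet G S ∧ v ∈ S) ∧
    (∃ S : Finset V, IsMaxDissocSet G S ∧ v ∉ S)

/-- The set of static-included vertices: vertices lying in every maximum dissociation set. -/
def staticIncluded {V : Type*} (G : SimpleGraph V) : Set V :=
  {v | ∀ S : Finset V, IsMaxDissocSet G S → v ∈ S}

/-- The set of static-excluded vertices: vertices lying in no maximum dissociation set. -/
def staticExcluded {V : Type*} (G : SimpleGraph V) : Set V :=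
  {v | ∀ S : Finset V, IsMaxDissocSet G S → v ∉ S}

/-- The (unordered) edge `uv` occurs as an edge of the path recorded by the list `l`. -/
def EdgeInList {V : Type*} (l : List V) (u v : V) : Prop :=
  ∃ p ∈ l.zip l.tail, p = (u, v) ∨ p = (v, u)


lemma dissBdd {V : Type*} [Fintype V] (G : SimpleGraph V) :
    BddAbove {n | ∃ S : Finset V, IsDissocSet G S ∧ S.card = n} :=
  ⟨Fintype.card V, by rintro n ⟨S, _, rfl⟩; exact Finset.card_le_univ S⟩

lemma card_le_dissNum {V : Type*} [Fintype V] {G : SimpleGraph V} {S : Finset V}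
    (h : IsDissocSet G S) : S.card ≤ dissNum G :=
  le_csSup (dissBdd G) ⟨S, h, rfl⟩

lemma exists_dissNum {V : Type*} [Fintype V] (G : SimpleGraph V) :
    ∃ S : Finset V, IsDissocSet G S ∧ S.card = dissNum G :=
  Nat.sSup_mem (s := {n | ∃ S : Finset V, IsDissocSet G S ∧ S.card = n})
    ⟨0, ∅, by simp [IsDissocSet], rfl⟩ (dissBdd G)

lemma exists_side {V : Type*} [Fintype V] [DecidableEq V] (T : SimpleGraph V) (hT : T.IsTree)
    (a b : V) (hab : T.Adj a b) :
    ∃ A : Finset V, a ∈ A ∧ b ∉ A ∧ ∀ x ∈ A, ∀ y, y ∉ A → T.Adj x y → x = a ∧ y = b := by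
  classical
  refine ⟨Finset.univ.filter fun v => (T.deleteEdges {s(a, b)}).Reachable a v, ?_, ?_, ?_⟩
  · simp
  · have := isAcyclic_iff_forall_adj_isBridge.1 hT.isAcyclic hab
    rw [isBridge_iff] at this
    intro h
    exact this (Finset.mem_filter.1 h).2
  · intro x hx y hy hxy
    simp only [Finset.mem_filter, Finset.mem_univ, true_and] at hx hy
    by_cases h : s(x, y) = s(a, b)
    · rw [Sym2.eq_iff] at h
      rcases h with h | ⟨rfl, rfl⟩
      · exact h
      · exact absurd (Reachable.refl _) hy
    · exact absurd (hx.trans (Adj.reachable (by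
        rw [deleteEdges_adj]; exact ⟨hxy, by simpa using h⟩))) hy

lemma side_lt {V : Type*} [Fintype V] [DecidableEq V] (T : SimpleGraph V)
    (a b : V) (A S D : Finset V) (haA : a ∈ A) (hbA : b ∉ A)
    (hA : ∀ x ∈ A, ∀ y, y ∉ A → T.Adj x y → x = a ∧ y = b)
    (hS : IsDissocSet T S) (hD : IsDissocSet (T.deleteEdges {s(a, b)}) D)
    (hlt : dissNum T < D.card) : ((S ∩ A).erase a).card < (D ∩ A).card := by
  have key : IsDissocSet T ((S ∩ A).erase a ∪ (D \ A)) := by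
    have hcross : ∀ x ∈ (S ∩ A).erase a ∪ (D \ A), ∀ y ∈ (S ∩ A).erase a ∪ (D \ A),
        T.Adj x y → (x ∈ A ↔ y ∈ A) := by
      intro x hx y hy hxy
      have := hA x
      have := hA y
      have := hxy.symm
      grind
    have hdel : ∀ x y, x ∉ A → y ∉ A → T.Adj x y → (T.deleteEdges {s(a, b)}).Adj x y := by
      intro x y hx hy hxy
      rw [deleteEdges_adj]
      refine ⟨hxy, ?_⟩
      simp only [Set.mem_singleton_iff, Sym2.eq_iff]
      grind
    intro v hv u hu w hw hvu hvw
    have h1 := hcross v hv u hu hvu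
    have h2 := hcross v hv w hw hvw
    by_cases hvA : v ∈ A
    · exact hS v (by grind) u (by grind) w (by grind) hvu hvw
    · exact hD v (by grind) u (by grind) w (by grind) (hdel _ _ hvA (by grind) hvu)
        (hdel _ _ hvA (by grind) hvw)
  have h1 := card_le_dissNum key
  rw [Finset.card_union_of_disjoint] at h1
  · have := Finset.card_inter_add_card_sdiff D A
    omega
  · rw [Finset.disjoint_left]; grind

/-- Every maximum dissociation set of a tree contains exactly two vertices of each
critical `3`-path (a `3`-path both of whose edges are `α₃`-critical). -/
theorem tree_maxDissoc_exactly_two_of_critical_threePath {V : Type*} [Fintype V]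
    [DecidableEq V] (T : SimpleGraph V) (hT : T.IsTree) :
    ∀ S : Finset V, IsMaxDissocSet T S → ∀ a b c : V, IsKPath T 3 [a, b, c] →
      IsAlpha3Critical T a b → IsAlpha3Critical T b c →
        (({a, b, c} : Finset V).filter (fun x => x ∈ S)).card = 2 := by
  rintro S ⟨hS, hSc⟩ a b c ⟨-, hnd, -⟩ ⟨hab, hab'⟩ ⟨hbc, hbc'⟩
  have hne : a ≠ b ∧ a ≠ c ∧ b ≠ c := by
    simp at hnd; tauto
  obtain ⟨nab, nac, nbc⟩ := hne
  obtain ⟨A, haA, hbA, hA⟩ := exists_side T hT a b hab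
  obtain ⟨C, hcC, hbC, hC, hdisj⟩ : ∃ C : Finset V, c ∈ C ∧ b ∉ C ∧
      (∀ x ∈ C, ∀ y, y ∉ C → T.Adj x y → x = c ∧ y = b) ∧ ∀ x ∈ C, x ∉ A := by
    obtain ⟨C, hcC, hbC, hC⟩ := exists_side T hT c b hbc.symm
    have hcA : c ∉ A := fun h => nac (hA c h b hbA hbc.symm).1.symm
    refine ⟨C \ A, by grind, by grind, ?_, by grind⟩
    intro x hx y hy hxy
    by_cases hyA : y ∈ A
    · have := hA y hyA x (by grind) hxy.symm
      grind
    · exact hC x (by grind) y (by grind) hxy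
  obtain ⟨D, hD, hDc⟩ := exists_dissNum (T.deleteEdges {s(a, b)})
  obtain ⟨E, hE, hEc⟩ := exists_dissNum (T.deleteEdges {s(b, c)})
  have hX := side_lt T a b A S D haA hbA hA hS hD (by omega)
  have hZ := side_lt T c b C S E hcC hbC hC hS (by rwa [Sym2.eq_swap]) (by omega)
  have key : IsDissocSet T ((D ∩ A) ∪ ((E ∩ C) ∪ ((S \ A) \ C).erase b)) := by
    set W := (D ∩ A) ∪ ((E ∩ C) ∪ ((S \ A) \ C).erase b) with hW
    have hbW : b ∉ W := by grind
    have cA : ∀ x ∈ W, ∀ y ∈ W, T.Adj x y → (x ∈ A ↔ y ∈ A) := by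
      intro x hx y hy hxy
      have := hA x
      have := hA y
      have := hxy.symm
      grind
    have cC : ∀ x ∈ W, ∀ y ∈ W, T.Adj x y → (x ∈ C ↔ y ∈ C) := by
      intro x hx y hy hxy
      have := hC x
      have := hC y
      have := hxy.symm
      grind
    have hdel : ∀ p x y, x ∈ W → y ∈ W → T.Adj x y →
        (T.deleteEdges {s(p, b)}).Adj x y := by
      intro p x y hx hy hxy
      rw [deleteEdges_adj]
      refine ⟨hxy, ?_⟩
      simp only [Set.mem_singleton_iff, Sym2.eq_iff]
      grind
    intro v hv u hu w hw hvu hvw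
    have h1 := cA v hv u hu hvu
    have h2 := cA v hv w hw hvw
    have h3 := cC v hv u hu hvu
    have h4 := cC v hv w hw hvw
    by_cases hvA : v ∈ A
    · exact hD v (by grind) u (by grind) w (by grind) (hdel _ _ _ hv hu hvu)
        (hdel _ _ _ hv hw hvw)
    · by_cases hvC : v ∈ C
      · rw [Sym2.eq_swap] at hE
        exact hE v (by grind) u (by grind) w (by grind) (hdel _ _ _ hv hu hvu)
          (hdel _ _ _ hv hw hvw)
      · exact hS v (by grind) u (by grind) w (by grind) hvu hvw
  have h1 := card_le_dissNum key
  rw [Finset.card_union_of_disjoint (by rw [Finset.disjoint_left]; grind),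
    Finset.card_union_of_disjoint (by rw [Finset.disjoint_left]; grind)] at h1
  have hsub : S \ {a, b, c} ⊆
      (S ∩ A).erase a ∪ ((S ∩ C).erase c ∪ ((S \ A) \ C).erase b) := by
    intro x hx
    grind
  have h2 := (Finset.card_le_card hsub).trans (Finset.card_union_le _ _)
  have h3 := Finset.card_union_le ((S ∩ C).erase c) (((S \ A) \ C).erase b)
  have h4 := Finset.card_inter_add_card_sdiff S {a, b, c}
  have h5 : ({a, b, c} : Finset V).filter (fun x => x ∈ S) = S ∩ {a, b, c} := by
    ext x; simp [and_comm]
  have h6 : (S ∩ {a, b, c}).card < 3 := by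
    have h3c : ({a, b, c} : Finset V).card = 3 := Finset.card_eq_three.2 ⟨a, b, c, nab, nac, nbc, rfl⟩
    rw [← h3c]
    apply Finset.card_lt_card
    refine ⟨Finset.inter_subset_right, fun h => ?_⟩
    have := hS b (by grind) a (by grind) c (by grind) hab.symm hbc
    exact nac this
  rw [h5]
  omega
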